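/- Let T, R, S be measure-preserving automorphisms of probability spaces (X, μ), (Z, m), (Y, ν) respectively, with S mixing. Let ρ be a probability measure on X × Z × Y invariant under T × R × S, whose marginal on X is μ and whose marginal on Z × Y is the product measure m ⊗ ν. Let (k_j) be a strictly increasing sequence of natural numbers such that the Koopman powers U_T^{k_j} converge weakly to a bounded operator V on L²(μ). Then for every bounded measurable f : X → ℝ, every bounded measurable h : Z → ℝ, and every bounded measurable g : Y → ℝ with ∫_Y g dν = 0, one has ∫_{X×Z×Y} (V f)(x) h(z) g(y) dρ(x,z,y) = 0. -/

import Mathlib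

open MeasureTheory Filter Topology

/-- A measure-preserving transformation `S` of `(Y, ν)` is mixing if
`ν (A ∩ S^{-n} B) → ν A * ν B` for all measurable sets `A`, `B`. -/
def MeasureMixing {Y : Type*} [MeasurableSpace Y] (S : Y → Y) (ν : Measure Y) : Prop :=
  ∀ A B : Set Y, MeasurableSet A → MeasurableSet B →
    Tendsto (fun n => ν (A ∩ S^[n] ⁻¹' B)) atTop (𝓝 (ν A * ν B))

/-!
Let `H = h ⊗ g` on `Z × Y`. Under `R × S` the autocorrelations of `H` are the product of those of
`h`, which are bounded, and those of `g`, which tend to `0` because `S` is mixing and `∫ g = 0`. As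
the `(Z × Y)`-marginal of `ρ` is a product, the lift of `H` to `X × Z × Y` has the same
autocorrelations under `τ = T × R × S`. By a theorem of Foguel, a vector `w` whose autocorrelations
`⟪Bⁿ w, w⟫` under a contraction `B` of a Hilbert space tend to `0` satisfies `⟪Bⁿ u, w⟫ → 0` for
every `u`. Apply this to the Koopman operator of `τ` and to `u` the lift of `F ∈ L²(μ)`: along
`k_j`, the vectors `U_τ^{k_j} u` are the lifts of `U_T^{k_j} F`, so they converge weakly to the lift
of `V F`, which is therefore orthogonal to `H`.
-/

section Hilbert

variable {𝕜 E F : Type*} [RCLike 𝕜] [NormedAddCommGroup E] [InnerProductSpace 𝕜 E]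
  [NormedAddCommGroup F] [InnerProductSpace 𝕜 F]

lemma isClosed_setOf_tendsto_inner_right {ι : Type*} {l : Filter ι} {a : ι → E} {C : ℝ}
    (ha : ∀ i, ‖a i‖ ≤ C) {φ : E → 𝕜} (hφ : Continuous φ) :
    IsClosed {y | Tendsto (fun i ↦ inner 𝕜 (a i) y) l (𝓝 (φ y))} := by
  refine (LipschitzWith.uniformEquicontinuous _ C.toNNReal
    fun i ↦ .of_dist_le' fun x y ↦ ?_).equicontinuous.isClosed_setOfPred_tendsto hφ
  rw [dist_eq_norm, dist_eq_norm, ← inner_sub_right]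
  exact (norm_inner_le_norm _ _).trans (by gcongr; exact ha i)

lemma isClosed_setOf_tendsto_inner_left {ι G : Type*} [PseudoMetricSpace G] {l : Filter ι}
    {A : ι → G → F} {K : NNReal} (hA : ∀ i, LipschitzWith K (A i)) (y : F) {φ : G → 𝕜}
    (hφ : Continuous φ) : IsClosed {x | Tendsto (fun i ↦ inner 𝕜 (A i x) y) l (𝓝 (φ x))} := by
  refine (LipschitzWith.uniformEquicontinuous _ (K * ‖y‖₊)
    fun i ↦ .of_dist_le_mul fun x x' ↦ ?_).equicontinuous.isClosed_setOfPred_tendsto hφ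
  calc dist (inner 𝕜 (A i x) y) (inner 𝕜 (A i x') y)
      ≤ dist (A i x) (A i x') * ‖y‖ := by
        rw [dist_eq_norm, dist_eq_norm, ← inner_sub_left]
        exact norm_inner_le_norm _ _
    _ ≤ K * dist x x' * ‖y‖ := by gcongr; exact (hA i).dist_le_mul x x'
    _ = ↑(K * ‖y‖₊) * dist x x' := by push_cast; ring

lemma antitone_norm_pow_apply {A : E →L[𝕜] E} (hA : ‖A‖ ≤ 1) (x : E) :
    Antitone fun n ↦ ‖(A ^ n) x‖ :=
  antitone_nat_of_succ_le fun n ↦ by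
    rw [pow_succ', mul_apply_eq_comp]
    exact A.le_of_opNorm_le_of_le hA le_rfl |>.trans_eq (one_mul _)

variable [CompleteSpace E]

lemma norm_adjoint_apply_sub_sq_le [CompleteSpace F] {B : E →L[𝕜] F} (hB : ‖B‖ ≤ 1)
    (x : E) :
    ‖B.adjoint (B x) - x‖ ^ 2 ≤ ‖x‖ ^ 2 - ‖B x‖ ^ 2 := by
  have hadj : ‖B.adjoint (B x)‖ ≤ ‖B x‖ := by
    simpa only [one_mul] using B.adjoint.le_of_opNorm_le
      ((ContinuousLinearMap.adjoint.norm_map B).trans_le hB) (B x)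
  have hre : RCLike.re (inner 𝕜 (B.adjoint (B x)) x) = ‖B x‖ ^ 2 := by
    rw [B.adjoint_inner_left, inner_self_eq_norm_sq]
  rw [norm_sub_sq (𝕜 := 𝕜), hre]
  nlinarith [norm_nonneg (B.adjoint (B x))]

lemma tendsto_adjoint_pow_apply_sub {A : E →L[𝕜] E} (hA : ‖A‖ ≤ 1) (k : ℕ) (x : E) :
    Tendsto (fun n ↦ (A ^ k).adjoint ((A ^ (k + n)) x) - (A ^ n) x) atTop (𝓝 0) := by
  have hAk : ‖A ^ k‖ ≤ 1 := (A ^ k).opNorm_le_bound zero_le_one fun y ↦ by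
    simpa using antitone_norm_pow_apply hA y (Nat.zero_le k)
  have hlim : Tendsto (fun n ↦ ‖(A ^ n) x‖ ^ 2) atTop (𝓝 ((⨅ n, ‖(A ^ n) x‖) ^ 2)) :=
    (tendsto_atTop_ciInf (antitone_norm_pow_apply hA x)
      ⟨0, by rintro _ ⟨n, rfl⟩; exact norm_nonneg _⟩).pow 2
  have hgap : Tendsto (fun n ↦ ‖(A ^ n) x‖ ^ 2 - ‖(A ^ (k + n)) x‖ ^ 2) atTop (𝓝 0) := by
    simpa only [add_comm k, sub_self] using hlim.sub ((tendsto_add_atTop_iff_nat k).2 hlim)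
  refine squeeze_zero_norm (fun n ↦ Real.le_sqrt_of_sq_le ?_)
    (by simpa only [Real.sqrt_zero] using hgap.sqrt)
  simpa only [pow_add, mul_apply_eq_comp] using
    norm_adjoint_apply_sub_sq_le hAk ((A ^ n) x)

-- The vectors asymptotically orthogonal to `A ^ n x` form a closed subspace. It contains the orbit
-- of `x` because `(A ^ k)†` almost undoes `A ^ k` late in the orbit, and trivially the orthogonal
-- complement of that orbit.
theorem tendsto_inner_pow_apply_of_self {A : E →L[𝕜] E} (hA : ‖A‖ ≤ 1) {x : E}
    (hx : Tendsto (fun n ↦ inner 𝕜 ((A ^ n) x) x) atTop (𝓝 0)) (y : E) :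
    Tendsto (fun n ↦ inner 𝕜 ((A ^ n) x) y) atTop (𝓝 0) := by
  let M : Submodule 𝕜 E :=
    { carrier := {y | Tendsto (fun n ↦ inner 𝕜 ((A ^ n) x) y) atTop (𝓝 0)}
      add_mem' := fun {a b} ha hb ↦ by
        simpa only [Set.mem_ofPred_eq, inner_add_right, add_zero] using Tendsto.add ha hb
      zero_mem' := by simp
      smul_mem' := fun c a ha ↦ by
        simpa only [Set.mem_ofPred_eq, inner_smul_right, mul_zero] using Tendsto.const_mul c ha }
  have hMclosed : IsClosed (M : Set E) :=
    isClosed_setOf_tendsto_inner_right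
      (fun n ↦ antitone_norm_pow_apply hA x (Nat.zero_le n)) continuous_const
  have horbit (k : ℕ) : (A ^ k) x ∈ M := by
    refine (tendsto_add_atTop_iff_nat k).1 ?_
    have hdiff := (tendsto_adjoint_pow_apply_sub hA k x).inner (𝕜 := 𝕜)
      (tendsto_const_nhds (x := x))
    simpa [inner_sub_left, ContinuousLinearMap.adjoint_inner_left, add_comm k] using hdiff.add hx
  have : CompleteSpace M := hMclosed.completeSpace_coe
  obtain ⟨a, ha, b, hb, rfl⟩ := M.exists_add_mem_mem_orthogonal y
  refine M.add_mem ha (tendsto_const_nhds.congr fun n ↦ ?_)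
  exact (hb _ (horbit n)).symm

theorem tendsto_inner_pow_apply_left_of_self {A : E →L[𝕜] E} (hA : ‖A‖ ≤ 1) {x : E}
    (hx : Tendsto (fun n ↦ inner 𝕜 ((A ^ n) x) x) atTop (𝓝 0)) (y : E) :
    Tendsto (fun n ↦ inner 𝕜 ((A ^ n) y) x) atTop (𝓝 0) := by
  have hadj (n : ℕ) (z : E) :
      inner 𝕜 ((A.adjoint ^ n) x) z = starRingEnd 𝕜 (inner 𝕜 ((A ^ n) z) x) := by
    rw [inner_conj_symm, ← ContinuousLinearMap.star_eq_adjoint, ← star_pow,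
      ContinuousLinearMap.star_eq_adjoint, ContinuousLinearMap.adjoint_inner_left]
  have hconj {u : ℕ → 𝕜} (hu : Tendsto u atTop (𝓝 0)) :
      Tendsto (fun n ↦ starRingEnd 𝕜 (u n)) atTop (𝓝 0) := by
    simpa only [map_zero, Function.comp_def] using (RCLike.continuous_conj.tendsto 0).comp hu
  have hself : Tendsto (fun n ↦ inner 𝕜 ((A.adjoint ^ n) x) x) atTop (𝓝 0) := by
    simpa only [hadj] using hconj hx
  have hA' : ‖A.adjoint‖ ≤ 1 := (ContinuousLinearMap.adjoint.norm_map A).trans_le hA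
  simpa only [hadj, RCLike.conj_conj] using hconj (tendsto_inner_pow_apply_of_self hA' hself y)

theorem inner_apply_eq_zero_of_tendsto_inner [CompleteSpace F] {A : E →L[𝕜] E} {B : F →L[𝕜] F}
    (hB : ‖B‖ ≤ 1) {J : E →L[𝕜] F} (hJ : Function.Semiconj J A B)
    {w : F} (hw : Tendsto (fun n ↦ inner 𝕜 ((B ^ n) w) w) atTop (𝓝 0))
    {k : ℕ → ℕ} (hk : Tendsto k atTop atTop) {x v : E}
    (hv : ∀ y, Tendsto (fun j ↦ inner 𝕜 ((A ^ k j) x) y) atTop (𝓝 (inner 𝕜 v y))) :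
    inner 𝕜 (J v) w = 0 := by
  have hlim := hv (J.adjoint w)
  have hJpow (n : ℕ) : J ((A ^ n) x) = (B ^ n) (J x) := by
    simpa only [pow_apply_eq_iterate] using hJ.iterate_right n x
  simp only [J.adjoint_inner_right, hJpow] at hlim
  exact tendsto_nhds_unique hlim ((tendsto_inner_pow_apply_left_of_self hB hw (J x)).comp hk)

end Hilbert

section Koopman

variable {Ω X 𝕜 : Type*} [RCLike 𝕜] [MeasurableSpace Ω] [MeasurableSpace X] {ρ : Measure Ω}
  {μ : Measure X} {π : Ω → X} {τ : Ω → Ω} {T : X → X}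

variable (𝕜) in
/-- The Koopman operator `f ↦ f ∘ π` on `L²` of a measure-preserving map `π`, which need be
neither invertible nor a self-map: the latter covers the embedding of `L²` of a factor. -/
noncomputable def koopman (hπ : MeasurePreserving π ρ μ) : Lp 𝕜 2 μ →L[𝕜] Lp 𝕜 2 ρ :=
  (Lp.compMeasurePreservingₗᵢ 𝕜 π hπ).toContinuousLinearMap

lemma koopman_apply (hπ : MeasurePreserving π ρ μ) (f : Lp 𝕜 2 μ) :
    koopman 𝕜 hπ f = Lp.compMeasurePreserving π hπ f := rfl

lemma norm_koopman_le (hπ : MeasurePreserving π ρ μ) : ‖koopman 𝕜 hπ‖ ≤ 1 :=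
  LinearIsometry.norm_toContinuousLinearMap_le _

lemma coeFn_koopman (hπ : MeasurePreserving π ρ μ) (f : Lp 𝕜 2 μ) :
    koopman 𝕜 hπ f =ᵐ[ρ] f ∘ π :=
  Lp.coeFn_compMeasurePreserving f hπ

lemma koopman_pow (hT : MeasurePreserving T μ μ) (n : ℕ) :
    koopman 𝕜 hT ^ n = koopman 𝕜 (hT.iterate n) := by
  ext1 f
  rw [pow_apply_eq_iterate]
  exact congrFun (Lp.compMeasurePreserving_iterate hT n) f

lemma semiconj_koopman (hπ : MeasurePreserving π ρ μ) (hτ : MeasurePreserving τ ρ ρ)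
    (hT : MeasurePreserving T μ μ) (hπτ : Function.Semiconj π τ T) :
    Function.Semiconj (koopman 𝕜 hπ) (koopman 𝕜 hT) (koopman 𝕜 hτ) := fun f ↦ by
  simp only [koopman_apply, ← Lp.compMeasurePreserving_comp_apply, hπτ.comp_eq]

lemma inner_eq_integral_mul_of_ae_eq {F G : Lp ℝ 2 ρ} {f g : Ω → ℝ} (hF : F =ᵐ[ρ] f)
    (hG : G =ᵐ[ρ] g) : inner ℝ F G = ∫ ω, f ω * g ω ∂ρ := by
  rw [L2.inner_def]
  refine integral_congr_ae ?_
  filter_upwards [hF, hG] with ω hFω hGω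
  rw [hFω, hGω, Real.inner_apply]

lemma inner_koopman_pow_toLp (hτ : MeasurePreserving τ ρ ρ) {f g : Ω → ℝ} (hf : MemLp f 2 ρ)
    (hg : MemLp g 2 ρ) (n : ℕ) :
    inner ℝ ((koopman ℝ hτ ^ n) (hf.toLp f)) (hg.toLp g) = ∫ ω, f (τ^[n] ω) * g ω ∂ρ := by
  rw [koopman_pow]
  exact inner_eq_integral_mul_of_ae_eq
    (hf.comp_measurePreserving (hτ.iterate n)).coeFn_toLp hg.coeFn_toLp

theorem integral_comp_mul_eq_zero_of_weak_limit (hπ : MeasurePreserving π ρ μ)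
    (hτ : MeasurePreserving τ ρ ρ) (hT : MeasurePreserving T μ μ) (hπτ : Function.Semiconj π τ T)
    {H : Ω → ℝ} (hH : MemLp H 2 ρ)
    (hcorr : Tendsto (fun n ↦ ∫ ω, H (τ^[n] ω) * H ω ∂ρ) atTop (𝓝 0))
    {k : ℕ → ℕ} (hk : Tendsto k atTop atTop) {F G : Lp ℝ 2 μ}
    (hFG : ∀ P : Lp ℝ 2 μ,
      Tendsto (fun j ↦ ∫ x, F (T^[k j] x) * P x ∂μ) atTop (𝓝 (inner ℝ G P))) :
    ∫ ω, G (π ω) * H ω ∂ρ = 0 := by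
  have hweak (P : Lp ℝ 2 μ) :
      Tendsto (fun j ↦ inner ℝ ((koopman ℝ hT ^ k j) F) P) atTop (𝓝 (inner ℝ G P)) := by
    refine (hFG P).congr fun j ↦ ?_
    rw [koopman_pow, inner_eq_integral_mul_of_ae_eq (coeFn_koopman (hT.iterate (k j)) F)
      (ae_eq_refl P)]
    simp only [Function.comp_apply]
  have hself : Tendsto (fun n ↦ inner ℝ ((koopman ℝ hτ ^ n) (hH.toLp H)) (hH.toLp H)) atTop
      (𝓝 0) := by
    simpa only [inner_koopman_pow_toLp] using hcorr
  have horth : inner ℝ (koopman ℝ hπ G) (hH.toLp H) = 0 :=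
    inner_apply_eq_zero_of_tendsto_inner (A := koopman ℝ hT) (B := koopman ℝ hτ)
      (norm_koopman_le hτ) (semiconj_koopman hπ hτ hT hπτ) hself hk (x := F) hweak
  rwa [inner_eq_integral_mul_of_ae_eq (coeFn_koopman hπ G) hH.coeFn_toLp] at horth

lemma abs_integral_comp_mul_le (hπ : MeasurePreserving π ρ μ) {f : X → ℝ} {g : Ω → ℝ}
    (hf : MemLp f 2 μ) (hg : MemLp g 2 ρ) :
    |∫ ω, f (π ω) * g ω ∂ρ| ≤ ‖hf.toLp f‖ * ‖hg.toLp g‖ := by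
  have hinner : inner ℝ (koopman ℝ hπ (hf.toLp f)) (hg.toLp g) = ∫ ω, f (π ω) * g ω ∂ρ :=
    inner_eq_integral_mul_of_ae_eq (hf.comp_measurePreserving hπ).coeFn_toLp hg.coeFn_toLp
  calc |∫ ω, f (π ω) * g ω ∂ρ|
      ≤ ‖koopman ℝ hπ (hf.toLp f)‖ * ‖hg.toLp g‖ := hinner ▸ abs_real_inner_le_norm _ _
    _ = ‖hf.toLp f‖ * ‖hg.toLp g‖ := by rw [koopman_apply, Lp.norm_compMeasurePreserving]

lemma integral_comp_iterate_mul_of_semiconj (hπ : MeasurePreserving π ρ μ)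
    (hT : MeasurePreserving T μ μ) (hπτ : Function.Semiconj π τ T) {f g : X → ℝ}
    (hf : AEStronglyMeasurable f μ) (hg : AEStronglyMeasurable g μ) (n : ℕ) :
    ∫ ω, f (π (τ^[n] ω)) * g (π ω) ∂ρ = ∫ x, f (T^[n] x) * g x ∂μ := by
  simp only [(hπτ.iterate_right n).eq]
  have hmeas : AEStronglyMeasurable (fun x ↦ f (T^[n] x) * g x) (ρ.map π) :=
    hπ.map_eq ▸ (hf.comp_measurePreserving (hT.iterate n)).mul hg
  rw [← hπ.map_eq, integral_map hπ.aemeasurable hmeas]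

end Koopman

section Mixing

variable {𝕜 Y : Type*} [RCLike 𝕜] [MeasurableSpace Y] {ν : Measure Y}
  [IsFiniteMeasure ν] {S : Y → Y}

lemma integral_eq_inner_indicatorConstLp_univ (f : Lp 𝕜 2 ν) :
    ∫ y, f y ∂ν = inner 𝕜 (indicatorConstLp 2 .univ (measure_ne_top ν _) (1 : 𝕜)) f := by
  rw [L2.inner_indicatorConstLp_one, setIntegral_univ]

lemma continuous_integral_Lp_two : Continuous fun f : Lp 𝕜 2 ν ↦ ∫ y, f y ∂ν := by
  simp only [integral_eq_inner_indicatorConstLp_univ]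
  fun_prop

lemma integral_add_Lp_two (f g : Lp 𝕜 2 ν) :
    ∫ y, (f + g) y ∂ν = ∫ y, f y ∂ν + ∫ y, g y ∂ν := by
  simp only [integral_eq_inner_indicatorConstLp_univ, inner_add_right]

namespace MeasureMixing

lemma tendsto_inner_koopman_pow_indicatorConstLp (hmix : MeasureMixing S ν)
    (hS : MeasurePreserving S ν ν) {A B : Set Y} (hA : MeasurableSet A) (hB : MeasurableSet B)
    (c d : 𝕜) :
    Tendsto (fun n ↦ inner 𝕜
        ((koopman 𝕜 hS ^ n) (indicatorConstLp 2 hA (measure_ne_top ν A) c))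
        (indicatorConstLp 2 hB (measure_ne_top ν B) d)) atTop
      (𝓝 (inner 𝕜 (∫ y, indicatorConstLp 2 hA (measure_ne_top ν A) c y ∂ν)
        (∫ y, indicatorConstLp 2 hB (measure_ne_top ν B) d y ∂ν))) := by
  have hreal : Tendsto (fun n ↦ ν.real (S^[n] ⁻¹' A ∩ B)) atTop (𝓝 (ν.real B * ν.real A)) := by
    simpa only [Set.inter_comm B, ENNReal.toReal_mul, Function.comp_def] using!
      (ENNReal.tendsto_toReal (by finiteness)).comp (hmix B A hB hA)
  simp only [koopman_pow, koopman_apply, integral_indicatorConstLp,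
    Lp.indicatorConstLp_compMeasurePreserving, L2.inner_indicatorConstLp_indicatorConstLp,
    inner_smul_left_eq_smul, inner_smul_right_eq_smul, smul_smul]
  exact hreal.smul_const _

theorem tendsto_inner_koopman_pow (hmix : MeasureMixing S ν) (hS : MeasurePreserving S ν ν)
    (f g : Lp 𝕜 2 ν) :
    Tendsto (fun n ↦ inner 𝕜 ((koopman 𝕜 hS ^ n) f) g) atTop
      (𝓝 (inner 𝕜 (∫ y, f y ∂ν) (∫ y, g y ∂ν))) := by
  have hiso (n : ℕ) : Isometry (koopman 𝕜 hS ^ n) := by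
    rw [koopman_pow]
    exact Lp.isometry_compMeasurePreserving _
  induction f using Lp.induction (p := 2) ENNReal.ofNat_ne_top with
  | isClosed =>
    exact isClosed_setOf_tendsto_inner_left (fun n ↦ (hiso n).lipschitz) g
      (continuous_integral_Lp_two.inner continuous_const)
  | add hf hf' _ ihf ihf' =>
    simpa only [map_add, inner_add_left, integral_add_Lp_two] using ihf.add ihf'
  | indicatorConst c hA =>
    induction g using Lp.induction (p := 2) ENNReal.ofNat_ne_top with
    | isClosed =>
      exact isClosed_setOf_tendsto_inner_right
        (fun n ↦ ((hiso n).norm_map_of_map_zero (map_zero _) _).le)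
        (continuous_const.inner continuous_integral_Lp_two)
    | add hg hg' _ ihg ihg' =>
      simpa only [inner_add_right, integral_add_Lp_two] using ihg.add ihg'
    | indicatorConst d hB =>
      exact hmix.tendsto_inner_koopman_pow_indicatorConstLp hS hA hB c d

theorem tendsto_integral_comp_iterate_mul (hmix : MeasureMixing S ν)
    (hS : MeasurePreserving S ν ν) {f g : Y → ℝ} (hf : MemLp f 2 ν) (hg : MemLp g 2 ν) :
    Tendsto (fun n ↦ ∫ y, f (S^[n] y) * g y ∂ν) atTop (𝓝 ((∫ y, f y ∂ν) * ∫ y, g y ∂ν)) := by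
  have h := hmix.tendsto_inner_koopman_pow hS (hf.toLp f) (hg.toLp g)
  simp only [inner_koopman_pow_toLp, integral_congr_ae hf.coeFn_toLp,
    integral_congr_ae hg.coeFn_toLp] at h
  rwa [Real.inner_apply] at h

end MeasureMixing

end Mixing

section Prod

variable {Z Y : Type*} [MeasurableSpace Z] [MeasurableSpace Y] {m : Measure Z} {ν : Measure Y}

lemma memLp_two_mul_prod [SFinite ν] {h : Z → ℝ} {g : Y → ℝ} (hh : MemLp h 2 m)
    (hg : MemLp g 2 ν) : MemLp (fun q : Z × Y ↦ h q.1 * g q.2) 2 (m.prod ν) := by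
  refine (memLp_two_iff_integrable_sq (hh.1.comp_fst.mul hg.1.comp_snd)).2 ?_
  simpa only [Pi.mul_apply, mul_pow] using hh.integrable_sq.mul_prod hg.integrable_sq

lemma MeasureMixing.tendsto_integral_prod_comp_iterate_mul [SFinite m] [IsFiniteMeasure ν]
    {R : Z → Z} (hR : MeasurePreserving R m m) {S : Y → Y} (hS : MeasurePreserving S ν ν)
    (hmix : MeasureMixing S ν) {h : Z → ℝ} (hh : MemLp h 2 m) {g : Y → ℝ} (hg : MemLp g 2 ν)
    (hg0 : ∫ y, g y ∂ν = 0) :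
    Tendsto (fun n ↦ ∫ q, h ((Prod.map R S)^[n] q).1 * g ((Prod.map R S)^[n] q).2 *
      (h q.1 * g q.2) ∂m.prod ν) atTop (𝓝 0) := by
  have hfactor (n : ℕ) :
      ∫ q, h ((Prod.map R S)^[n] q).1 * g ((Prod.map R S)^[n] q).2 * (h q.1 * g q.2) ∂m.prod ν =
        (∫ z, h (R^[n] z) * h z ∂m) * ∫ y, g (S^[n] y) * g y ∂ν := by
    simp only [Prod.map_iterate, Prod.map_fst, Prod.map_snd, mul_mul_mul_comm]
    exact integral_prod_mul (fun z ↦ h (R^[n] z) * h z) fun y ↦ g (S^[n] y) * g y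
  simp only [hfactor]
  refine bdd_le_mul_tendsto_zero' (‖hh.toLp h‖ * ‖hh.toLp h‖)
    (.of_forall fun n ↦ abs_integral_comp_mul_le (hR.iterate n) hh hh) ?_
  simpa only [hg0, mul_zero] using hmix.tendsto_integral_comp_iterate_mul hS hg hg

end Prod

theorem coupling_integral_vanishes_general {X Z Y : Type*} [MeasurableSpace X]
    [MeasurableSpace Z] [MeasurableSpace Y] {μ : Measure X} {m : Measure Z} {ν : Measure Y}
    [SFinite m] [IsFiniteMeasure ν]
    {T : X → X} (hT : MeasurePreserving T μ μ) {R : Z → Z} (hR : MeasurePreserving R m m)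
    {S : Y → Y} (hS : MeasurePreserving S ν ν) (hSmix : MeasureMixing S ν)
    {ρ : Measure (X × Z × Y)} (hρ : MeasurePreserving (Prod.map T (Prod.map R S)) ρ ρ)
    (hfst : MeasurePreserving Prod.fst ρ μ) (hsnd : MeasurePreserving Prod.snd ρ (m.prod ν))
    {k : ℕ → ℕ} (hk : Tendsto k atTop atTop) {F G : Lp ℝ 2 μ}
    (hFG : ∀ P : Lp ℝ 2 μ,
      Tendsto (fun j ↦ ∫ x, F (T^[k j] x) * P x ∂μ) atTop (𝓝 (inner ℝ G P)))
    {h : Z → ℝ} (hh : MemLp h 2 m) {g : Y → ℝ} (hg : MemLp g 2 ν) (hg0 : ∫ y, g y ∂ν = 0) :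
    ∫ p, G p.1 * h p.2.1 * g p.2.2 ∂ρ = 0 := by
  let Q : Z × Y → ℝ := fun q ↦ h q.1 * g q.2
  have hQ : MemLp Q 2 (m.prod ν) := memLp_two_mul_prod hh hg
  have hcorr : Tendsto (fun n ↦ ∫ p, Q ((Prod.map T (Prod.map R S))^[n] p).2 * Q p.2 ∂ρ) atTop
      (𝓝 0) := by
    have hsemi : Function.Semiconj Prod.snd (Prod.map T (Prod.map R S)) (Prod.map R S) :=
      fun _ ↦ rfl
    simp only [integral_comp_iterate_mul_of_semiconj hsnd (hR.prod hS) hsemi hQ.1 hQ.1]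
    exact hSmix.tendsto_integral_prod_comp_iterate_mul hR hS hh hg hg0
  simpa only [mul_assoc, Function.comp_apply, Q] using
    integral_comp_mul_eq_zero_of_weak_limit hfst hρ hT (fun _ ↦ rfl)
      (hQ.comp_measurePreserving hsnd) hcorr hk hFG

/-- Inductive step of the paper's argument: if `ρ` is a `(T × R × S)`-invariant coupling on
`X × Z × Y` whose `X`-marginal is `μ` and whose `(Z × Y)`-marginal is the product `m ⊗ ν`,
`S` is mixing, and `U_T^{k_j} → V` weakly, then `∫ (V f)(x) h(z) g(y) dρ = 0` whenever
`f`, `h`, `g` are bounded measurable and `∫ g dν = 0`. -/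
theorem coupling_integral_vanishes
    {X Z Y : Type*} [MeasurableSpace X] [MeasurableSpace Z] [MeasurableSpace Y]
    (μ : Measure X) (m : Measure Z) (ν : Measure Y)
    [IsProbabilityMeasure μ] [IsProbabilityMeasure m] [IsProbabilityMeasure ν]
    (T : X ≃ᵐ X) (hT : MeasurePreserving T μ μ)
    (R : Z ≃ᵐ Z) (hR : MeasurePreserving R m m)
    (S : Y ≃ᵐ Y) (hS : MeasurePreserving S ν ν) (hSmix : MeasureMixing (⇑S) ν)
    (ρ : Measure (X × Z × Y)) [IsProbabilityMeasure ρ]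
    (hρinv : ρ.map (Prod.map ⇑T (Prod.map ⇑R ⇑S)) = ρ)
    (hρ1 : ρ.map Prod.fst = μ) (hρ2 : ρ.map Prod.snd = m.prod ν)
    (k : ℕ → ℕ) (hk : StrictMono k)
    (V : Lp ℝ 2 μ →L[ℝ] Lp ℝ 2 μ)
    (hV : ∀ f g : Lp ℝ 2 μ,
      Tendsto (fun j => ∫ x, f ((⇑T)^[k j] x) * g x ∂μ) atTop (𝓝 (@inner ℝ _ _ (V f) g)))
    (f : X → ℝ) (hfm : Measurable f) (hfb : ∃ C : ℝ, ∀ x, |f x| ≤ C)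
    (F : Lp ℝ 2 μ) (hF : (F : X → ℝ) =ᵐ[μ] f)
    (h : Z → ℝ) (hhm : Measurable h) (hhb : ∃ C : ℝ, ∀ z, |h z| ≤ C)
    (g : Y → ℝ) (hgm : Measurable g) (hgb : ∃ C : ℝ, ∀ y, |g y| ≤ C)
    (hgint : ∫ y, g y ∂ν = 0) :
    ∫ p, (V F : X → ℝ) p.1 * h p.2.1 * g p.2.2 ∂ρ = 0 := by
  obtain ⟨Ch, hCh⟩ := hhb
  obtain ⟨Cg, hCg⟩ := hgb
  exact coupling_integral_vanishes_general hT hR hS hSmix ⟨by fun_prop, hρinv⟩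
    ⟨measurable_fst, hρ1⟩ ⟨measurable_snd, hρ2⟩ hk.tendsto_atTop (hV F)
    (.of_bound hhm.aestronglyMeasurable Ch (.of_forall hCh))
    (.of_bound hgm.aestronglyMeasurable Cg (.of_forall hCg)) hgint
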